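/- arXiv:2212.04284 — 2 statements merged into one kernel-verified Lean document; each statement's English description precedes it below -/
import Mathlib

section
/- Suppose r_i β_i⁺ e^{d_i⁺ r_i} ≤ e for each i = 1,…,m. Then each μ_i = (1/r_i)·ln(e²/(r_i β_i⁺)) is strictly positive (so B = diag(−μ₁,…,−μ_m) has negative diagonal entries), and the Nicholson right-hand side f(t,φ), with components f_i(t,φ) = −d̃_i(t)φ_i(0) + Σ_{j=1}^m ã_{ij}(t)φ_j(0) + β̃_i(t)φ_i(−r_i)e^{−c̃_i(t)φ_i(−r_i)}, satisfies the quasimonotone condition for the exponential order: for every t ∈ ℝ and all φ, ψ ∈ X with φ ≤_B ψ, f_i(t,ψ) − f_i(t,φ) ≥ −μ_i(ψ_i(0) − φ_i(0)) for each i. Consequently the solutions are monotone for ≤_B: if φ ≤_B ψ then y_t(φ) ≤_B y_t(ψ) for all t ≥ 0. -/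
open MeasureTheory Filter Topology Set

noncomputable section

namespace Nicholson

/-- An almost periodic function: continuous, with a relatively dense set of
`ε`-periods for every `ε > 0`. -/
def AlmostPeriodic (f : ℝ → ℝ) : Prop :=
  Continuous f ∧ ∀ ε > 0, ∃ L > 0, ∀ a : ℝ, ∃ s ∈ Set.Icc a (a + L),
    ∀ t, |f (t + s) - f t| < ε

/-- The phase space `X = C([-r₁,0]) × ⋯ × C([-r_m,0])` (as plain functions;
continuity is carried by the solutions). -/
abbrev XN (m : ℕ) (r : Fin m → ℝ) := ∀ i : Fin m, Set.Icc (-(r i)) (0:ℝ) → ℝ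

/-- The cone `X₊` of componentwise nonnegative functions. -/
def XPos {m : ℕ} {r : Fin m → ℝ} (φ : XN m r) : Prop := ∀ i s, 0 ≤ φ i s

/-- The point `0 ∈ [-rᵢ,0]`. -/
def pt0N {m : ℕ} (r : Fin m → ℝ) (hr : ∀ i, 0 < r i) (i : Fin m) :
    Set.Icc (-(r i)) (0:ℝ) :=
  ⟨0, Set.mem_Icc.mpr ⟨by linarith [hr i], le_rfl⟩⟩

/-- The point `-rᵢ ∈ [-rᵢ,0]`. -/
def ptnegN {m : ℕ} (r : Fin m → ℝ) (hr : ∀ i, 0 < r i) (i : Fin m) :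
    Set.Icc (-(r i)) (0:ℝ)  :=
  ⟨-(r i), Set.mem_Icc.mpr ⟨le_rfl, by linarith [hr i]⟩⟩

/-- Conditions (a1)-(a6) on the coefficients of the Nicholson system. -/
def NicholsonHyps (m : ℕ) (d : Fin m → ℝ → ℝ) (a : Fin m → Fin m → ℝ → ℝ)
    (β c : Fin m → ℝ → ℝ) : Prop :=
  (∀ i, AlmostPeriodic (d i)) ∧ (∀ i j, AlmostPeriodic (a i j)) ∧
  (∀ i, AlmostPeriodic (β i)) ∧ (∀ i, AlmostPeriodic (c i)) ∧
  (∃ d₀ > 0, ∀ i t, d₀ ≤ d i t) ∧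
  (∀ i j t, 0 ≤ a i j t) ∧ (∀ i t, a i i t = 0) ∧
  (∀ i t, 0 < β i t) ∧
  (∃ c₀ > 0, ∀ i t, c₀ ≤ c i t) ∧
  (∀ i t, 0 < d i t - ∑ j, a j i t)

/-- The right-hand side of the `i`-th Nicholson equation along a function `y`. -/
def rhs {m : ℕ} (d : Fin m → ℝ → ℝ) (a : Fin m → Fin m → ℝ → ℝ) (β c : Fin m → ℝ → ℝ)
    (r : Fin m → ℝ) (i : Fin m) (t : ℝ) (y : ℝ → Fin m → ℝ) : ℝ :=
  -(d i t) * y t i + (∑ j, a i j t * y t j) +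
    β i t * y (t - r i) i * Real.exp (-(c i t * y (t - r i) i))

/-- `y` is the solution of the Nicholson system with initial value `φ ∈ X`. -/
def SolN {m : ℕ} (d : Fin m → ℝ → ℝ) (a : Fin m → Fin m → ℝ → ℝ) (β c : Fin m → ℝ → ℝ)
    (r : Fin m → ℝ) (φ : XN m r) (y : ℝ → Fin m → ℝ) : Prop :=
  (∀ i, ContinuousOn (fun t => y t i) (Set.Ici (-(r i)))) ∧
  (∀ i (s : Set.Icc (-(r i)) (0:ℝ)), y (s : ℝ) i = φ i s) ∧
  ∀ i t, 0 ≤ t → HasDerivWithinAt (fun u => y u i) (rhs d a β c r i t y) (Set.Ici t) t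

/-- `b` is an entire (globally defined) solution of the Nicholson system. -/
def EntireSolN {m : ℕ} (d : Fin m → ℝ → ℝ) (a : Fin m → Fin m → ℝ → ℝ)
    (β c : Fin m → ℝ → ℝ) (r : Fin m → ℝ) (b : ℝ → Fin m → ℝ) : Prop :=
  ∀ i t, HasDerivAt (fun u => b u i) (rhs d a β c r i t b) t

/-- The segment `y_t ∈ X` of `y`. -/
def segN {m : ℕ} (r : Fin m → ℝ) (y : ℝ → Fin m → ℝ) (t : ℝ) : XN m r :=
  fun i s => y (t + (s : ℝ)) i

/-- The exponential order `φ ≤_B ψ` for `B = diag(-μ₁,…,-μ_m)`. -/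
def expLeN {m : ℕ} (μ : Fin m → ℝ) {r : Fin m → ℝ} (φ ψ : XN m r) : Prop :=
  (∀ i s, φ i s ≤ ψ i s) ∧
  ∀ i, ∀ s t : Set.Icc (-(r i)) (0:ℝ), (s : ℝ) ≤ (t : ℝ) →
    (ψ i s - φ i s) * Real.exp (μ i * (s : ℝ)) ≤ (ψ i t - φ i t) * Real.exp (μ i * (t : ℝ))

/-- The zero element of `X`. -/
def zeroN (m : ℕ) (r : Fin m → ℝ) : XN m r := fun _ _ => 0

/-- Extension of the `i`-th component of `φ` to `ℝ` by the projection onto `[-rᵢ,0]`. -/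
def extN {m : ℕ} {r : Fin m → ℝ} (hr : ∀ i, 0 < r i) (φ : XN m r) (i : Fin m) : ℝ → ℝ :=
  fun s => φ i (Set.projIcc (-(r i)) 0 (by linarith [hr i]) s)

/-- `φ ≫_B 0`: `φ` is Lipschitz, `φᵢ(-rᵢ) > 0` and
`ess inf (φᵢ' + μᵢ φᵢ) > 0` on `[-rᵢ,0]` for each `i`. -/
def strPosN {m : ℕ} {r : Fin m → ℝ} (hr : ∀ i, 0 < r i) (μ : Fin m → ℝ)
    (φ : XN m r) : Prop :=
  (∀ i, ∃ K, LipschitzWith K (φ i)) ∧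
  (∀ i, 0 < φ i (ptnegN r hr i)) ∧
  ∀ i, ∃ ε > 0, ∀ᵐ s ∂(volume.restrict (Set.Ioo (-(r i)) (0:ℝ))),
    DifferentiableAt ℝ (extN hr φ i) s ∧
    ε ≤ deriv (extN hr φ i) s + μ i * extN hr φ i s

/-- The Nicholson nonlinearity `fᵢ(t,φ)`. -/
def fN {m : ℕ} (d : Fin m → ℝ → ℝ) (a : Fin m → Fin m → ℝ → ℝ) (β c : Fin m → ℝ → ℝ)
    (r : Fin m → ℝ) (hr : ∀ i, 0 < r i) (i : Fin m) (t : ℝ) (φ : XN m r) : ℝ :=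
  -(d i t) * φ i (pt0N r hr i) + (∑ j, a i j t * φ j (pt0N r hr j)) +
    β i t * φ i (ptnegN r hr i) * Real.exp (-(c i t * φ i (ptnegN r hr i)))

/-- The supremum over `ℝ` of a real function. -/
def supR (f : ℝ → ℝ) : ℝ := sSup (Set.range f)

/-- The exponents `μᵢ = (1/rᵢ) ln(e²/(rᵢ βᵢ⁺))`. -/
def muN {m : ℕ} (r : Fin m → ℝ) (β : Fin m → ℝ → ℝ) (i : Fin m) : ℝ :=
  (1 / r i) * Real.log (Real.exp 2 / (r i * supR (β i)))

end Nicholson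

namespace Nicholson

lemma ap_bdd {f : ℝ → ℝ} (h : AlmostPeriodic f) : BddAbove (Set.range f) := by
  obtain ⟨hc, h⟩ := h
  obtain ⟨L, hL, h⟩ := h 1 one_pos
  obtain ⟨C, hC⟩ := (isCompact_Icc (a := (0:ℝ)) (b := L)).bddAbove_image hc.continuousOn
  refine ⟨C + 1, ?_⟩
  rintro _ ⟨t, rfl⟩
  obtain ⟨s, hs, hst⟩ := h (-t)
  have h1 := abs_lt.mp (hst t)
  have h2 : f (t + s) ≤ C := hC ⟨t + s, ⟨by linarith [hs.1], by linarith [hs.2]⟩, rfl⟩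
  linarith [h1.1]

lemma le_supR {f : ℝ → ℝ} (h : AlmostPeriodic f) (t : ℝ) : f t ≤ supR f :=
  le_csSup (ap_bdd h) ⟨t, rfl⟩

/-- lower Lipschitz bound for the Ricker function -/
lemma ricker {c u v : ℝ} (huv : u ≤ v) :
    -(Real.exp (-2)) * (v - u) ≤ v * Real.exp (-(c * v)) - u * Real.exp (-(c * u)) := by
  have hd : ∀ x : ℝ, HasDerivAt (fun x => x * Real.exp (-(c * x)) + Real.exp (-2) * x)
      ((1 - c * x) * Real.exp (-(c * x)) + Real.exp (-2)) x := by
    intro x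
    have h1 : HasDerivAt (fun x : ℝ => -(c * x)) (-(c * 1)) x :=
      ((hasDerivAt_id x).const_mul c).neg
    have h2 := ((hasDerivAt_id x).mul h1.exp).add ((hasDerivAt_id x).const_mul (Real.exp (-2)))
    refine (h2.congr_deriv ?_)
    simp only [id]
    ring
  have hm : Monotone (fun x => x * Real.exp (-(c * x)) + Real.exp (-2) * x) := by
    apply monotone_of_hasDerivAt_nonneg hd
    intro x
    have h1 : c * x - 1 ≤ Real.exp (c * x - 2) := by
      have := Real.add_one_le_exp (c * x - 2)
      linarith
    have h2 : Real.exp (-2) = Real.exp (c * x - 2) * Real.exp (-(c * x)) := by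
      rw [← Real.exp_add]; congr 1; ring
    have h3 := Real.exp_pos (-(c * x))
    simp only [Pi.zero_apply]
    rw [h2]
    nlinarith
  have := hm huv
  simp only at this
  linarith

lemma coop {ι : Type} [Fintype ι] (u u' p : ι → ℝ → ℝ) (q : ι → ι → ℝ → ℝ) (T T' M : ℝ)
    (hc : ∀ i, ContinuousOn (u i) (Icc T T'))
    (hd : ∀ i, ∀ t ∈ Ico T T', HasDerivWithinAt (u i) (u' i t) (Ici t) t)
    (hq : ∀ i j t, 0 ≤ q i j t)
    (hM : ∀ i, ∀ t ∈ Icc T T', p i t + ∑ j, q i j t ≤ M)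
    (h : ∀ i, ∀ t ∈ Ico T T', p i t * u i t + ∑ j, q i j t * u j t ≤ u' i t)
    (h0 : ∀ i, 0 ≤ u i T) : ∀ i, ∀ t ∈ Icc T T', 0 ≤ u i t := by
  have key : ∀ ε > 0, ∀ t ∈ Icc T T', ∀ i, 0 ≤ u i t + ε * Real.exp ((M + 1) * t) := by
    intro ε hε
    have hvc : ∀ i, ContinuousOn (fun t => u i t + ε * Real.exp ((M + 1) * t)) (Icc T T') := by
      intro i
      exact (hc i).add (by fun_prop)
    have := IsClosed.Icc_subset_of_forall_exists_gt (a := T) (b := T')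
      (s := {t | ∀ i, 0 ≤ u i t + ε * Real.exp ((M + 1) * t)}) ?_ ?_ ?_
    · exact fun t ht => this ht
    · have : {t | ∀ i, 0 ≤ u i t + ε * Real.exp ((M + 1) * t)} ∩ Icc T T'
          = Icc T T' ∩ ⋂ i, (Icc T T' ∩
            (fun t => u i t + ε * Real.exp ((M + 1) * t)) ⁻¹' (Ici 0)) := by
        ext t
        simp only [mem_inter_iff, mem_setOf_eq, mem_iInter, mem_preimage, mem_Ici]
        constructor
        · rintro ⟨h1, h2⟩
          exact ⟨h2, fun i => ⟨h2, h1 i⟩⟩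
        · rintro ⟨h1, h2⟩
          exact ⟨fun i => (h2 i).2, h1⟩
      rw [this]
      exact isClosed_Icc.inter (isClosed_iInter fun i =>
        (hvc i).preimage_isClosed_of_isClosed isClosed_Icc isClosed_Ici)
    · intro i
      have := h0 i
      positivity
    · rintro x ⟨hx, hxI⟩ y hy
      have hxy : x < y := hy
      simp only [mem_setOf_eq] at hx
      have hev : ∀ i, ∀ᶠ t in 𝓝[>] x, 0 ≤ u i t + ε * Real.exp ((M + 1) * t) := by
        intro i
        have hexp : HasDerivAt (fun t => ε * Real.exp ((M + 1) * t))
            (ε * (Real.exp ((M + 1) * x) * ((M + 1) * 1))) x :=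
          (((hasDerivAt_id x).const_mul (M + 1)).exp).const_mul ε
        have hder := (hd i x hxI).add hexp.hasDerivWithinAt (s := Ici x)
        rcases (hx i).lt_or_eq with hpos | hzero
        · have hcont : Tendsto (fun t => u i t + ε * Real.exp ((M + 1) * t)) (𝓝[>] x)
              (𝓝 (u i x + ε * Real.exp ((M + 1) * x))) :=
            (hder.continuousWithinAt.mono Ioi_subset_Ici_self)
          exact (hcont.eventually (lt_mem_nhds hpos)).mono fun t ht => le_of_lt ht
        · have hE : 0 < ε * Real.exp ((M + 1) * x) := by positivity
          have hb := h i x hxI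
          have hs : ∑ j, q i j x * (-(ε * Real.exp ((M + 1) * x))) ≤ ∑ j, q i j x * u j x := by
            apply Finset.sum_le_sum
            intro j _
            apply mul_le_mul_of_nonneg_left _ (hq i j x)
            linarith [hx j]
          rw [← Finset.sum_mul] at hs
          have hui : u i x = -(ε * Real.exp ((M + 1) * x)) := by linarith
          have hMx := hM i x ⟨hxI.1, hxI.2.le⟩
          have hpos : 0 < u' i x + ε * (Real.exp ((M + 1) * x) * ((M + 1) * 1)) := by
            rw [hui] at hb
            nlinarith
          have hsl := hder.Ioi_of_Ici
          rw [hasDerivWithinAt_iff_tendsto_slope' (by simp)] at hsl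
          filter_upwards [hsl.eventually (lt_mem_nhds hpos), self_mem_nhdsWithin] with t ht1 ht2
          have ht2' : x < t := ht2
          rw [slope_def_field] at ht1
          have h3 := (div_pos_iff_of_pos_right (sub_pos.mpr ht2')).mp ht1
          simp only [Pi.add_apply] at h3
          linarith
      have hall : ∀ᶠ t in 𝓝[>] x, ∀ i, 0 ≤ u i t + ε * Real.exp ((M + 1) * t) :=
        eventually_all.mpr hev
      have hI : ∀ᶠ t in 𝓝[>] x, t ∈ Ioc x y := Ioc_mem_nhdsGT hxy
      obtain ⟨t, ht1, ht2⟩ := (hall.and hI).exists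
      exact ⟨t, ht1, ht2⟩
  intro i t ht
  by_contra hneg
  push Not at hneg
  have hE := Real.exp_pos ((M + 1) * t)
  have := key (-(u i t) / (2 * Real.exp ((M + 1) * t))) (by
    apply div_pos <;> linarith) t ht i
  have h2 : -(u i t) / (2 * Real.exp ((M + 1) * t)) * Real.exp ((M + 1) * t) = -(u i t) / 2 := by
    field_simp
  linarith

lemma mono_right (x x' : ℝ → ℝ) (T T' : ℝ) (hc : ContinuousOn x (Icc T T'))
    (hd : ∀ t ∈ Ico T T', HasDerivWithinAt x (x' t) (Ici t) t)
    (h : ∀ t ∈ Ico T T', 0 ≤ x' t) : MonotoneOn x (Icc T T') := by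
  intro s hs t ht hst
  have := coop (ι := Unit) (fun _ t => x t - x s) (fun _ => x') (fun _ _ => 0) (fun _ _ _ => 0)
    s T' 0 (fun _ => (hc.mono (Icc_subset_Icc_left hs.1)).sub continuousOn_const)
    (fun _ t ht => (hd t ⟨hs.1.trans ht.1, ht.2⟩).sub_const _) (by simp) (by simp)
    (by intro _ t ht; simpa using h t ⟨hs.1.trans ht.1, ht.2⟩) (by simp) () t ⟨hst, ht.2⟩
  simpa using this

lemma mu_facts {d β r : ℝ} {D Bp μ : ℝ} (hr : 0 < r) (hβ : 0 < β) (hβB : β ≤ Bp) (hdD : d ≤ D)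
    (hcond : r * Bp * Real.exp (D * r) ≤ Real.exp 1)
    (hμ : μ = (1 / r) * Real.log (Real.exp 2 / (r * Bp))) :
    β * Real.exp (-2) * Real.exp (μ * r) ≤ 1 / r ∧ d + 1 / r ≤ μ := by
  have hB : 0 < Bp := hβ.trans_le hβB
  have hμr : μ * r = Real.log (Real.exp 2 / (r * Bp)) := by
    rw [hμ]; field_simp
  constructor
  · rw [hμr, Real.exp_log (by positivity), Real.exp_neg]
    have : β * (Real.exp 2)⁻¹ * (Real.exp 2 / (r * Bp)) = (β / Bp) * (1 / r) := by
      field_simp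
    rw [this]
    have h1 : β / Bp ≤ 1 := (div_le_one hB).mpr hβB
    have h2 : 0 < 1 / r := by positivity
    nlinarith
  · have h1 := Real.log_le_log (by positivity) hcond
    rw [Real.log_mul (by positivity) (by positivity), Real.log_exp, Real.log_exp] at h1
    rw [Real.log_div (by positivity) (by positivity), Real.log_exp] at hμr
    have h2 : (d + 1 / r) * r ≤ μ * r := by
      have : (d + 1 / r) * r = d * r + 1 := by field_simp
      rw [this]
      nlinarith
    exact le_of_mul_le_mul_right h2 hr

lemma rhs_diff {m : ℕ} (d : Fin m → ℝ → ℝ) (a : Fin m → Fin m → ℝ → ℝ) (β c : Fin m → ℝ → ℝ)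
    (r : Fin m → ℝ) (i : Fin m) (t : ℝ) (y z : ℝ → Fin m → ℝ) (hβ : 0 < β i t)
    (h : 0 ≤ z (t - r i) i - y (t - r i) i) :
    -(d i t) * (z t i - y t i) + (∑ j, a i j t * (z t j - y t j))
      - β i t * Real.exp (-2) * (z (t - r i) i - y (t - r i) i) ≤
    rhs d a β c r i t z - rhs d a β c r i t y := by
  have h1 := ricker (c := c i t) (sub_nonneg.mp h)
  have h2 := mul_le_mul_of_nonneg_left h1 hβ.le
  simp only [rhs, mul_sub, Finset.sum_sub_distrib]
  simp only [mul_sub] at h2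
  linarith

lemma step {m : ℕ} (d : Fin m → ℝ → ℝ) (a : Fin m → Fin m → ℝ → ℝ) (β c : Fin m → ℝ → ℝ)
    (r μ : Fin m → ℝ)
    (hdc : ∀ i, Continuous (d i)) (hac : ∀ i j, Continuous (a i j))
    (ha : ∀ i j t, 0 ≤ a i j t) (hβ : ∀ i t, 0 < β i t)
    (h1 : ∀ i t, β i t * Real.exp (-2) * Real.exp (μ i * r i) ≤ 1 / r i)
    (h2 : ∀ i t, d i t + 1 / r i ≤ μ i)
    (y z : ℝ → Fin m → ℝ)
    (hyc : ∀ i, ContinuousOn (fun t => y t i) (Set.Ici (-(r i))))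
    (hzc : ∀ i, ContinuousOn (fun t => z t i) (Set.Ici (-(r i))))
    (hy : ∀ i t, 0 ≤ t → HasDerivWithinAt (fun u => y u i) (rhs d a β c r i t y) (Set.Ici t) t)
    (hz : ∀ i t, 0 ≤ t → HasDerivWithinAt (fun u => z u i) (rhs d a β c r i t z) (Set.Ici t) t)
    (hr : ∀ i, 0 < r i)
    (h0 : ∀ i, 0 ≤ z (-(r i)) i - y (-(r i)) i)
    (ρ : ℝ) (hρ : ∀ i, ρ ≤ r i) (hρ0 : 0 < ρ) (T : ℝ) (hT : 0 ≤ T)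
    (hP : ∀ i, MonotoneOn (fun t => (z t i - y t i) * Real.exp (μ i * t)) (Icc (-(r i)) T)) :
    ∀ i, MonotoneOn (fun t => (z t i - y t i) * Real.exp (μ i * t)) (Icc (-(r i)) (T + ρ)) := by
  set x : Fin m → ℝ → ℝ := fun i t => (z t i - y t i) * Real.exp (μ i * t) with hx
  set x' : Fin m → ℝ → ℝ := fun i t => (rhs d a β c r i t z - rhs d a β c r i t y) *
    Real.exp (μ i * t) + (z t i - y t i) * (Real.exp (μ i * t) * (μ i * 1)) with hx'
  set q : Fin m → Fin m → ℝ → ℝ := fun i j t => a i j t * Real.exp ((μ i - μ j) * t) with hq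
  have hrT : ∀ i, -(r i) ≤ T := fun i => by linarith [hr i]
  have hξ : ∀ i, 0 ≤ x i T := by
    intro i
    have := hP i (left_mem_Icc.mpr (hrT i)) (right_mem_Icc.mpr (hrT i)) (hrT i)
    refine le_trans ?_ this
    exact mul_nonneg (h0 i) (Real.exp_pos _).le
  have hxc : ∀ i, ContinuousOn (x i) (Icc T (T + ρ)) := by
    intro i
    have hs : Icc T (T + ρ) ⊆ Ici (-(r i)) := fun t ht => (hrT i).trans ht.1
    exact (((hzc i).mono hs).sub ((hyc i).mono hs)).mul (by fun_prop)
  have hxd : ∀ i, ∀ t ∈ Ico T (T + ρ), HasDerivWithinAt (x i) (x' i t) (Ici t) t := by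
    intro i t ht
    have h0t := hT.trans ht.1
    exact ((hz i t h0t).sub (hy i t h0t)).mul
      ((((hasDerivAt_id t).const_mul (μ i)).exp).hasDerivWithinAt)
  have hqn : ∀ i j t, 0 ≤ q i j t := fun i j t => mul_nonneg (ha i j t) (Real.exp_pos _).le
  have hmain : ∀ i, ∀ t ∈ Ico T (T + ρ),
      (μ i - d i t) * x i t + ∑ j, q i j t * x j t - (1 / r i) * x i T ≤ x' i t := by
    intro i t ht
    have hmem : t - r i ∈ Icc (-(r i)) T :=
      ⟨by linarith [ht.1], by linarith [ht.2, hρ i]⟩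
    have hlo : 0 ≤ x i (t - r i) :=
      le_trans (mul_nonneg (h0 i) (Real.exp_pos _).le)
        (hP i (left_mem_Icc.mpr (hrT i)) hmem hmem.1)
    have hhi : x i (t - r i) ≤ x i T := hP i hmem (right_mem_Icc.mpr (hrT i)) hmem.2
    have hw : 0 ≤ z (t - r i) i - y (t - r i) i :=
      nonneg_of_mul_nonneg_left hlo (Real.exp_pos _)
    have hR := rhs_diff d a β c r i t y z (hβ i t) hw
    have hR2 := mul_le_mul_of_nonneg_right hR (Real.exp_pos (μ i * t)).le
    have hsum : ∑ j, q i j t * x j t =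
        (∑ j, a i j t * (z t j - y t j)) * Real.exp (μ i * t) := by
      rw [Finset.sum_mul]
      refine Finset.sum_congr rfl fun j _ => ?_
      have : Real.exp (μ i * t) = Real.exp ((μ i - μ j) * t) * Real.exp (μ j * t) := by
        rw [← Real.exp_add]; congr 1; ring
      rw [this, hq, hx]
      ring
    have hdel : β i t * Real.exp (-2) * (z (t - r i) i - y (t - r i) i) * Real.exp (μ i * t)
        ≤ (1 / r i) * x i T := by
      have : Real.exp (μ i * t) = Real.exp (μ i * r i) * Real.exp (μ i * (t - r i)) := by
        rw [← Real.exp_add]; congr 1; ring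
      calc _ = (β i t * Real.exp (-2) * Real.exp (μ i * r i)) * x i (t - r i) := by
              rw [this, hx]; ring
        _ ≤ (1 / r i) * x i (t - r i) := mul_le_mul_of_nonneg_right (h1 i t) hlo
        _ ≤ _ := mul_le_mul_of_nonneg_left hhi (by have := hr i; positivity)
    rw [hsum]
    simp only [hx', hx] at hdel ⊢
    linarith
  have hbd : ∃ M, ∀ i, ∀ t ∈ Icc T (T + ρ), (μ i - d i t) + ∑ j, q i j t ≤ M := by
    have : ∀ i, ∃ M, ∀ t ∈ Icc T (T + ρ), (μ i - d i t) + ∑ j, q i j t ≤ M := by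
      intro i
      have hcont : Continuous (fun t => (μ i - d i t) + ∑ j, q i j t) := by
        have := hdc i
        have := hac i
        simp only [hq]
        fun_prop
      obtain ⟨C, hC⟩ := (isCompact_Icc (a := T) (b := T + ρ)).bddAbove_image hcont.continuousOn
      exact ⟨C, fun t ht => hC ⟨t, ht, rfl⟩⟩
    choose M hM using this
    obtain ⟨C, hC⟩ := (Set.finite_range M).bddAbove
    exact ⟨C, fun i t ht => (hM i t ht).trans (hC ⟨i, rfl⟩)⟩
  obtain ⟨M, hM⟩ := hbd
  have hge := coop (fun i t => x i t - x i T) x' (fun i t => μ i - d i t) q T (T + ρ) M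
    (fun i => (hxc i).sub continuousOn_const) (fun i t ht => (hxd i t ht).sub_const _) hqn hM
    (by
      intro i t ht
      have := hmain i t ht
      have hs : 0 ≤ ∑ j, q i j t * x j T :=
        Finset.sum_nonneg fun j _ => mul_nonneg (hqn i j t) (hξ j)
      have h3 := mul_le_mul_of_nonneg_right (h2 i t) (hξ i)
      simp only [mul_sub, Finset.sum_sub_distrib]
      linarith)
    (by simp)
  intro i
  have hm2 : MonotoneOn (x i) (Icc T (T + ρ)) := by
    apply mono_right (x i) (x' i) T (T + ρ) (hxc i) (hxd i)
    intro t ht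
    refine le_trans ?_ (hmain i t ht)
    have hxt : ∀ j, x j T ≤ x j t := fun j => by linarith [hge j t ⟨ht.1, ht.2.le⟩]
    have hs : 0 ≤ ∑ j, q i j t * x j t :=
      Finset.sum_nonneg fun j _ => mul_nonneg (hqn i j t) ((hξ j).trans (hxt j))
    have h3 := mul_le_mul_of_nonneg_right (h2 i t) ((hξ i).trans (hxt i))
    have h4 : (1 / r i) * x i T ≤ (1 / r i) * x i t :=
      mul_le_mul_of_nonneg_left (hxt i) (by have := hr i; positivity)
    linarith
  intro s hs t ht hst
  rcases le_total t T with h | h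
  · exact hP i ⟨hs.1, hst.trans h⟩ ⟨ht.1, h⟩ hst
  · rcases le_total s T with h' | h'
    · exact (hP i ⟨hs.1, h'⟩ (right_mem_Icc.mpr (hrT i)) h').trans
        (hm2 ⟨le_rfl, by linarith⟩ ⟨h, ht.2⟩ h)
    · exact hm2 ⟨h', hs.2⟩ ⟨h, ht.2⟩ hst

/-- under `rᵢ βᵢ⁺ e^{dᵢ⁺ rᵢ} ≤ e`, the exponents `μᵢ` are positive and the
Nicholson nonlinearity satisfies the quasimonotone condition for the exponential order;
consequently the solutions are monotone for `≤_B`. -/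
theorem statement15
    {m : ℕ} (hm : 1 ≤ m)
    (d : Fin m → ℝ → ℝ) (a : Fin m → Fin m → ℝ → ℝ) (β c : Fin m → ℝ → ℝ)
    (r : Fin m → ℝ) (hr : ∀ i, 0 < r i)
    (hN : NicholsonHyps m d a β c)
    (hcond : ∀ i, r i * supR (β i) * Real.exp (supR (d i) * r i) ≤ Real.exp 1) :
    (∀ i, 0 < muN r β i) ∧
    (∀ (t : ℝ) (φ ψ : XN m r), expLeN (muN r β) φ ψ →
      ∀ i, -(muN r β i) * (ψ i (pt0N r hr i) - φ i (pt0N r hr i)) ≤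
        fN d a β c r hr i t ψ - fN d a β c r hr i t φ) ∧
    ∀ φ ψ : XN m r, XPos φ → XPos ψ → expLeN (muN r β) φ ψ →
      ∀ y z : ℝ → Fin m → ℝ, SolN d a β c r φ y → SolN d a β c r ψ z →
        ∀ t, 0 ≤ t → expLeN (muN r β) (segN r y t) (segN r z t) := by
  obtain ⟨hda, haa, hβa, hca, ⟨d₀, hd₀, hd⟩, ha, haii, hβ, -, -⟩ := hN
  have hf : ∀ i t, β i t * Real.exp (-2) * Real.exp (muN r β i * r i) ≤ 1 / r i ∧
      d i t + 1 / r i ≤ muN r β i := fun i t =>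
    mu_facts (hr i) (hβ i t) (le_supR (hβa i) t) (le_supR (hda i) t) (hcond i) rfl
  refine ⟨?_, ?_, ?_⟩
  · intro i
    have h1 := (hf i 0).2
    have h2 := hd i 0
    have h3 := one_div_pos.mpr (hr i)
    linarith
  · intro t φ ψ hle i
    obtain ⟨hle1, hle2⟩ := hle
    have hw := hle1 i (ptnegN r hr i)
    have h1 := mul_le_mul_of_nonneg_left (ricker (c := c i t) hw) (hβ i t).le
    have hexp := hle2 i (ptnegN r hr i) (pt0N r hr i) (by
      simp only [ptnegN, pt0N]; linarith [hr i])
    have hw0 := hle1 i (pt0N r hr i)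
    have hs : 0 ≤ ∑ j, a i j t * (ψ j (pt0N r hr j) - φ j (pt0N r hr j)) :=
      Finset.sum_nonneg fun j _ => mul_nonneg (ha i j t) (sub_nonneg.mpr (hle1 j _))
    have e1 : ((ptnegN r hr i : Set.Icc (-(r i)) (0:ℝ)) : ℝ) = -(r i) := rfl
    have e2 : ((pt0N r hr i : Set.Icc (-(r i)) (0:ℝ)) : ℝ) = 0 := rfl
    rw [e1, e2, mul_zero, Real.exp_zero, mul_one] at hexp
    obtain ⟨hf1, hf2⟩ := hf i t
    simp only [fN]
    generalize ψ i (ptnegN r hr i) = ψr at *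
    generalize φ i (ptnegN r hr i) = φr at *
    have hE : Real.exp (muN r β i * r i) * Real.exp (muN r β i * -(r i)) = 1 := by
      rw [← Real.exp_add, ← Real.exp_zero]; congr 1; ring
    have hnn : 0 ≤ (ψr - φr) * Real.exp (muN r β i * -(r i)) :=
      mul_nonneg (sub_nonneg.mpr hw) (Real.exp_pos _).le
    have hdel : β i t * Real.exp (-2) * (ψr - φr) ≤
        (1 / r i) * (ψ i (pt0N r hr i) - φ i (pt0N r hr i)) := by
      calc _ = (β i t * Real.exp (-2) * (ψr - φr)) *
            (Real.exp (muN r β i * r i) * Real.exp (muN r β i * -(r i))) := by rw [hE, mul_one]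
        _ = (β i t * Real.exp (-2) * Real.exp (muN r β i * r i)) *
            ((ψr - φr) * Real.exp (muN r β i * -(r i))) := by ring
        _ ≤ (1 / r i) * ((ψr - φr) * Real.exp (muN r β i * -(r i))) :=
            mul_le_mul_of_nonneg_right hf1 hnn
        _ ≤ _ := mul_le_mul_of_nonneg_left hexp (one_div_pos.mpr (hr i)).le
    have h3 := mul_le_mul_of_nonneg_right hf2 (sub_nonneg.mpr hw0)
    simp only [mul_sub, Finset.sum_sub_distrib] at *
    linarith
  · intro φ ψ _ _ hle y z hy hz t ht
    obtain ⟨hle1, hle2⟩ := hle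
    obtain ⟨hyc, hyi, hyd⟩ := hy
    obtain ⟨hzc, hzi, hzd⟩ := hz
    obtain ⟨ρ, hρ0, hρ⟩ : ∃ ρ > 0, ∀ i, ρ ≤ r i := by
      haveI : Nonempty (Fin m) := ⟨⟨0, hm⟩⟩
      obtain ⟨i0, hi0⟩ := Finite.exists_min r
      exact ⟨r i0, hr i0, hi0⟩
    have h0 : ∀ i, 0 ≤ z (-(r i)) i - y (-(r i)) i := by
      intro i
      have e1 := hyi i (ptnegN r hr i)
      have e2 := hzi i (ptnegN r hr i)
      have := hle1 i (ptnegN r hr i)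
      rw [← e1, ← e2] at this
      exact sub_nonneg.mpr this
    have hall : ∀ n : ℕ, ∀ i, MonotoneOn
        (fun t => (z t i - y t i) * Real.exp (muN r β i * t)) (Icc (-(r i)) (n * ρ)) := by
      intro n
      induction n with
      | zero =>
        intro i s hs t ht hst
        simp only [Nat.cast_zero, zero_mul] at hs ht
        have := hle2 i ⟨s, hs⟩ ⟨t, ht⟩ hst
        rw [← hyi, ← hyi, ← hzi, ← hzi] at this
        exact this
      | succ n ih =>
        have := step d a β c r (muN r β) (fun i => (hda i).1) (fun i j => (haa i j).1) ha hβ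
          (fun i t => (hf i t).1) (fun i t => (hf i t).2) y z hyc hzc hyd hzd hr h0 ρ hρ hρ0
          (n * ρ) (by positivity) ih
        have e : ((n + 1 : ℕ) : ℝ) * ρ = n * ρ + ρ := by push_cast; ring
        rw [e]
        exact this
    obtain ⟨n, hn⟩ := exists_nat_ge (t / ρ)
    rw [div_le_iff₀ hρ0] at hn
    have hmem : ∀ i (s : Set.Icc (-(r i)) (0:ℝ)), t + (s : ℝ) ∈ Icc (-(r i)) (n * ρ) :=
      fun i s => ⟨by linarith [s.2.1], by linarith [s.2.2]⟩
    constructor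
    · intro i s
      have := hall n i (left_mem_Icc.mpr ((hmem i s).1.trans (hmem i s).2)) (hmem i s) (hmem i s).1
      have h1 : 0 ≤ (z (t + (s : ℝ)) i - y (t + (s : ℝ)) i) *
          Real.exp (muN r β i * (t + (s : ℝ))) :=
        le_trans (mul_nonneg (h0 i) (Real.exp_pos _).le) this
      exact sub_nonneg.mp (nonneg_of_mul_nonneg_left h1 (Real.exp_pos _))
    · intro i s s' hss
      have := hall n i (hmem i s) (hmem i s') (by linarith)
      simp only [mul_add, Real.exp_add] at this
      simp only [segN]
      have hE := Real.exp_pos (muN r β i * t)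
      refine le_of_mul_le_mul_right ?_ hE
      linarith

end Nicholson
end
end

section
/- Suppose r_i β_i⁺ e^{d_i⁺ r_i} < e for each i = 1,…,m. Then the following two properties of the Nicholson system are equivalent: (a) uniform persistence in Int K̃_B: there exists a Lipschitz ψ ≫_B 0 such that for every Lipschitz φ ≫_B 0 there is t₀ = t₀(φ) with ψ ≤_B y_t(φ) for all t ≥ t₀; (b) uniform persistence in Int X₊: there exists M > 0 such that for every φ ∈ X₊ with φ(0) ≫ 0 there is t₀ = t₀(φ) with y_i(t,φ) ≥ M for all t ≥ t₀ and all i = 1,…,m. -/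
open MeasureTheory Filter Topology Set

noncomputable section

namespace Nicholson


lemma mono_of_right {f f' : ℝ → ℝ} {a b : ℝ} (hab : a ≤ b)
    (hf : ContinuousOn f (Icc a b)) (hf' : ∀ x ∈ Ico a b, HasDerivWithinAt f (f' x) (Ici x) x)
    (h : ∀ x ∈ Ico a b, 0 ≤ f' x) : f a ≤ f b := by
  have := image_le_of_deriv_right_le_deriv_boundary (f := fun _ => f a) (f' := fun _ => 0)
    (B := f) (B' := f') (a := a) (b := b) continuousOn_const
    (fun x _ => hasDerivWithinAt_const _ _ _) le_rfl hf hf' h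
  exact this (right_mem_Icc.2 hab)

lemma exp_mono_of_right {f f' : ℝ → ℝ} {a b : ℝ} (μ : ℝ) (hab : a ≤ b)
    (hf : ContinuousOn f (Icc a b)) (hf' : ∀ x ∈ Ico a b, HasDerivWithinAt f (f' x) (Ici x) x)
    (h : ∀ x ∈ Ico a b, 0 ≤ f' x + μ * f x) :
    f a * Real.exp (μ * a) ≤ f b * Real.exp (μ * b) := by
  have he : ∀ x, HasDerivAt (fun s => Real.exp (μ * s)) (Real.exp (μ * x) * μ) x := by
    intro x
    have := ((hasDerivAt_id x).const_mul μ).exp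
    simpa using this
  refine mono_of_right (f := fun s => f s * Real.exp (μ * s))
    (f' := fun x => f' x * Real.exp (μ * x) + f x * (Real.exp (μ * x) * μ)) hab
    (hf.mul (by fun_prop)) (fun x hx => (hf' x hx).mul (he x).hasDerivWithinAt) ?_
  intro x hx
  have := mul_nonneg (h x hx) (Real.exp_pos (μ * x)).le
  nlinarith

lemma ap_bdd_s17 {f : ℝ → ℝ} (h : AlmostPeriodic f) : ∃ C, 0 ≤ C ∧ ∀ t, |f t| ≤ C := by
  obtain ⟨hc, hp⟩ := h
  obtain ⟨L, hL, hs⟩ := hp 1 one_pos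
  obtain ⟨C, hC⟩ := (isCompact_Icc (a := (0:ℝ)) (b := L)).exists_bound_of_continuousOn hc.continuousOn
  refine ⟨C + 1, ?_, fun t => ?_⟩
  · have := (norm_nonneg _).trans (hC 0 ⟨le_rfl, hL.le⟩)
    linarith
  · obtain ⟨s, hs1, hs2⟩ := hs (-t)
    have h1 := hC (t + s) ⟨by linarith [hs1.1], by linarith [hs1.2]⟩
    have h2 := hs2 t
    rw [Real.norm_eq_abs] at h1
    rw [abs_lt] at h2
    rw [abs_le] at *
    constructor <;> linarith

/-- `h(x) = x e^{-cx}`. -/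
lemma ric_deriv (c x : ℝ) : HasDerivAt (fun x => x * Real.exp (-(c * x)))
    ((1 - c * x) * Real.exp (-(c * x))) x := by
  have h1 : HasDerivAt (fun x => Real.exp (-(c * x))) (Real.exp (-(c * x)) * (-(c * 1))) x :=
    (((hasDerivAt_id x).const_mul c).neg).exp
  have := (hasDerivAt_id' x).mul h1
  exact this.congr_deriv (by ring)

lemma ric_low (c x y : ℝ) (hxy : x ≤ y) :
    -(Real.exp (-2) * (y - x)) ≤ y * Real.exp (-(c * y)) - x * Real.exp (-(c * x)) := by
  have hd : ∀ x, HasDerivAt (fun x => x * Real.exp (-(c * x)) + Real.exp (-2) * x)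
    ((1 - c * x) * Real.exp (-(c * x)) + Real.exp (-2) * 1) x := fun x =>
      (ric_deriv c x).add ((hasDerivAt_id x).const_mul _)
  have hm := monotone_of_hasDerivAt_nonneg hd (fun x => by
    have h1 := Real.add_one_le_exp (c * x - 2)
    have h2 : Real.exp (-2) = Real.exp (c * x - 2) * Real.exp (-(c * x)) := by
      rw [← Real.exp_add]; congr 1; ring
    rw [mul_one, h2, ← add_mul]
    exact mul_nonneg (by linarith) (Real.exp_pos _).le)
  have := hm hxy
  linarith

lemma ric_up (c x y : ℝ) (hc : 0 ≤ c) (hx : 0 ≤ x) (hxy : x ≤ y) :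
    y * Real.exp (-(c * y)) - x * Real.exp (-(c * x)) ≤ y - x := by
  have hd : ∀ x, HasDerivAt (fun x => x - x * Real.exp (-(c * x)))
    (1 - (1 - c * x) * Real.exp (-(c * x))) x := fun x =>
      (hasDerivAt_id x).sub (ric_deriv c x)
  have := mono_of_right (f := fun x => x - x * Real.exp (-(c * x))) hxy (by fun_prop)
    (fun z _ => (hd z).hasDerivWithinAt) (fun z hz => by
      have hz0 : 0 ≤ c * z := mul_nonneg hc (hx.trans hz.1)
      have he : Real.exp (-(c * z)) ≤ 1 := Real.exp_le_one_iff.2 (by linarith)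
      have := Real.exp_pos (-(c * z))
      nlinarith)
  linarith

lemma ric_lip (c x y : ℝ) (hc : 0 ≤ c) :
    |max y 0 * Real.exp (-(c * max y 0)) - max x 0 * Real.exp (-(c * max x 0))| ≤ |y - x| := by
  have key : ∀ x y : ℝ, 0 ≤ x → x ≤ y →
      |y * Real.exp (-(c * y)) - x * Real.exp (-(c * x))| ≤ |y - x| := by
    intro x y hx hxy
    rw [abs_of_nonneg (sub_nonneg.2 hxy), abs_le]
    refine ⟨?_, ric_up c x y hc hx hxy⟩
    have h1 := ric_low c x y hxy
    have h2 : Real.exp (-2) ≤ 1 := Real.exp_le_one_iff.2 (by norm_num)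
    nlinarith [mul_le_mul_of_nonneg_right h2 (sub_nonneg.2 hxy)]
  refine le_trans ?_ (abs_max_sub_max_le_abs y x 0)
  rcases le_total (max x 0) (max y 0) with h | h
  · exact key _ _ (le_max_right _ _) h
  · rw [abs_sub_comm, abs_sub_comm (max y 0)]
    exact key _ _ (le_max_right _ _) h

/-- Strongly positive elements are pointwise positive. -/
lemma strPos_pos {m : ℕ} {r : Fin m → ℝ} (hr : ∀ i, 0 < r i) (μ : Fin m → ℝ)
    (φ : XN m r) (h : strPosN hr μ φ) (i : Fin m) (s : Set.Icc (-(r i)) (0:ℝ)) : 0 < φ i s := by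
  obtain ⟨h1, h2, h3⟩ := h
  obtain ⟨K, hK⟩ := h1 i
  obtain ⟨ε, hε, hae⟩ := h3 i
  have hle : -(r i) ≤ (0:ℝ) := by linarith [hr i]
  set g := extN hr φ i with hg
  have hgl : LipschitzWith K g := by
    have := hK.comp (LipschitzWith.projIcc hle)
    rw [mul_one] at this
    exact this
  have hgac : AbsolutelyContinuousOnInterval g (-(r i)) s :=
    hgl.lipschitzOnWith.absolutelyContinuousOnInterval
  have heac : AbsolutelyContinuousOnInterval (fun t => Real.exp (μ i * t)) (-(r i)) s :=
    ContDiffOn.absolutelyContinuousOnInterval (by fun_prop)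
  have he : ∀ x, HasDerivAt (fun s => Real.exp (μ i * s)) (Real.exp (μ i * x) * μ i) x := by
    intro x
    have := ((hasDerivAt_id x).const_mul (μ i)).exp
    simpa using this
  have key := hgac.integral_deriv_mul_eq_sub heac
  have hnn : 0 ≤ ∫ x in (-(r i))..s, deriv g x * Real.exp (μ i * x)
      + g x * deriv (fun t => Real.exp (μ i * t)) x := by
    apply intervalIntegral.integral_nonneg_of_ae_restrict s.2.1
    have h4 : ∀ᵐ x ∂(volume.restrict (Set.Icc (-(r i)) (s:ℝ))), x ∈ Ioo (-(r i)) (0:ℝ) → 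
        DifferentiableAt ℝ g x ∧ ε ≤ deriv g x + μ i * g x :=
      ae_restrict_of_ae ((ae_restrict_iff' measurableSet_Ioo).1 hae)
    have h5 : ∀ᵐ x ∂(volume.restrict (Set.Icc (-(r i)) (s:ℝ))), x ≠ -(r i) ∧ x ≠ 0 := by
      apply ae_restrict_of_ae
      exact (Measure.ae_ne volume _).and (Measure.ae_ne volume _)
    filter_upwards [h4, h5, ae_restrict_mem measurableSet_Icc] with x hx4 hx5 hx
    have hx6 : x ∈ Ioo (-(r i)) (0:ℝ) := ⟨lt_of_le_of_ne hx.1 (Ne.symm hx5.1),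
      lt_of_le_of_ne (hx.2.trans s.2.2) hx5.2⟩
    have := (hx4 hx6).2
    rw [(he x).deriv]
    have h7 := mul_nonneg (hε.le.trans this) (Real.exp_pos (μ i * x)).le
    simp only [Pi.zero_apply]
    nlinarith
  rw [key] at hnn
  have e1 : g s = φ i s := by simp [hg, extN, projIcc_val]
  have e2 : g (-(r i)) = φ i (ptnegN r hr i) := by
    simp [hg, extN, ptnegN]
  rw [e1, e2] at hnn
  have h8 := mul_pos (h2 i) (Real.exp_pos (μ i * -(r i)))
  have h9 : 0 < φ i s * Real.exp (μ i * s) := by linarith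
  exact pos_of_mul_pos_left h9 (Real.exp_pos _).le

lemma strPos_const {m : ℕ} {r : Fin m → ℝ} (hr : ∀ i, 0 < r i) (μ : Fin m → ℝ)
    (hμ : ∀ i, 0 < μ i) (ε : Fin m → ℝ) (hε : ∀ i, 0 < ε i) :
    strPosN hr μ (fun i _ => ε i) := by
  refine ⟨fun i => ⟨0, LipschitzWith.const _⟩, hε, fun i => ⟨μ i * ε i, mul_pos (hμ i) (hε i), ?_⟩⟩
  refine Eventually.of_forall fun s => ?_
  have : extN hr (fun i _ => ε i) i = fun _ => ε i := rfl
  rw [this]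
  simp

/-- First-time principle. -/
lemma first_time {m : ℕ} (G : Fin m → ℝ → ℝ) (T : ℝ)
    (hc : ∀ i, ContinuousOn (G i) (Ici T)) 
    (hstep : ∀ t, T ≤ t → (∀ j, ∀ s ∈ Ico T t, 0 < G j s) → ∀ i, 0 < G i t) :
    ∀ t, T ≤ t → ∀ i, 0 < G i t := by
  by_contra hcon
  push Not at hcon
  obtain ⟨t1, ht1, i1, hi1⟩ := hcon
  set S := {t | t ∈ Icc T t1 ∧ ∃ i, G i t ≤ 0} with hS
  have hSu : S = ⋃ i, {t | t ∈ Icc T t1 ∧ G i t ≤ 0} := by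
    ext t; simp [hS]
  have hScl : IsClosed S := by
    rw [hSu]
    apply isClosed_iUnion_of_finite
    intro i
    exact ((hc i).mono (Icc_subset_Ici_self)).preimage_isClosed_of_isClosed isClosed_Icc isClosed_Iic
  have hne : S.Nonempty := ⟨t1, ⟨ht1, le_rfl⟩, i1, hi1⟩
  have hbd : BddBelow S := ⟨T, fun t ht => ht.1.1⟩
  have hmem := hScl.csInf_mem hne hbd
  obtain ⟨⟨ha, hb⟩, i, hi⟩ := hmem
  refine absurd (hstep (sInf S) ha ?_ i) (not_lt.2 hi)
  intro j s hs
  by_contra hneg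
  have : s ∈ S := ⟨⟨hs.1, hs.2.le.trans hb⟩, j, not_lt.1 hneg⟩
  exact absurd (csInf_le hbd this) (not_le.2 hs.2)

/-- Global existence for Lipschitz delay systems, with an exponential bound. -/
lemma exists_sol {m : ℕ} (r : Fin m → ℝ) (hr : ∀ i, 0 < r i)
    (F : Fin m → ℝ → (Fin m → ℝ) → ℝ → ℝ)
    (hFc : ∀ i, Continuous (fun p : ℝ × (Fin m → ℝ) × ℝ => F i p.1 p.2.1 p.2.2))
    (K : ℝ) (hK : 0 < K)
    (hF0 : ∀ i s, F i s 0 0 = 0)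
    (hFL : ∀ i s z z' v v' ρ, ‖z - z'‖ ≤ ρ → |v - v'| ≤ ρ → |F i s z v - F i s z' v'| ≤ K * ρ)
    (δ : ℝ) (hδ : 0 < δ) :
    ∃ z : ℝ → Fin m → ℝ, Continuous z ∧ (∀ t ≤ 0, ∀ i, z t i = δ) ∧
      (∀ t, 0 ≤ t → ∀ i, |z t i| ≤ 2 * δ * Real.exp (2 * K * t)) ∧
      ∀ t, 0 ≤ t → ∀ i, HasDerivWithinAt (fun u => z u i) (F i t (z t) (z (t - r i) i)) (Ici t) t := by
  set E : ℝ → ℝ := fun s => Real.exp (2 * K * max s 0) with hE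
  have hEc : Continuous E := by fun_prop
  have hEpos : ∀ s, 0 < E s := fun s => Real.exp_pos _
  have hEmono : ∀ s t, s ≤ t → E s ≤ E t := by
    intro s t hst
    apply Real.exp_le_exp.2
    have := max_le_max_right 0 hst
    nlinarith
  have hE1 : ∀ s, 1 ≤ E s := fun s => by
    apply Real.one_le_exp
    have := le_max_right s 0
    positivity
  -- the integrand
  let g : (ℝ → Fin m → ℝ) → Fin m → ℝ → ℝ := fun u i s =>
    F i s (E s • u s) (E (s - r i) * u (s - r i) i)
  have hgc : ∀ u : ℝ → Fin m → ℝ, Continuous u → ∀ i, Continuous (g u i) := by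
    intro u hu i
    have h1 : Continuous (fun s : ℝ => (s, E s • u s, E (s - r i) * u (s - r i) i)) := by
      fun_prop
    exact (hFc i).comp h1
  let P : (ℝ → Fin m → ℝ) → ℝ → Fin m → ℝ := fun u t i =>
    (E t)⁻¹ * (δ + ∫ s in (0:ℝ)..(max t 0), g u i s)
  have hPc : ∀ u : ℝ → Fin m → ℝ, Continuous u → Continuous (P u) := by
    intro u hu
    apply continuous_pi
    intro i
    apply Continuous.mul (hEc.inv₀ (fun s => (hEpos s).ne'))
    apply continuous_const.add
    have := intervalIntegral.continuous_primitive (fun a b => (hgc u hu i).intervalIntegrable a b) (μ := volume) 0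
    exact this.comp (continuous_id.max continuous_const)
  have hdiff : ∀ u v : ℝ → Fin m → ℝ, Continuous u → Continuous v → ∀ ρ, 0 ≤ ρ →
      (∀ t, ‖u t - v t‖ ≤ ρ) → ∀ t i, |P u t i - P v t i| ≤ ρ / 2 := by
    intro u v hu hv ρ hρ0 hρ t i
    have e1 : P u t i - P v t i = (E t)⁻¹ * ∫ s in (0:ℝ)..(max t 0), (g u i s - g v i s) := by
      rw [intervalIntegral.integral_sub ((hgc u hu i).intervalIntegrable _ _)
        ((hgc v hv i).intervalIntegrable _ _)]
      simp only [P]; ring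
    have hpt : ∀ s, |g u i s - g v i s| ≤ K * (E s * ρ) := by
      intro s
      apply hFL
      · rw [← smul_sub, norm_smul, Real.norm_eq_abs, abs_of_pos (hEpos s)]
        exact mul_le_mul_of_nonneg_left (hρ s) (hEpos s).le
      · rw [← mul_sub, abs_mul, abs_of_pos (hEpos _)]
        have h2 : |u (s - r i) i - v (s - r i) i| ≤ ρ := by
          have := norm_le_pi_norm (u (s - r i) - v (s - r i)) i
          exact this.trans (hρ _)
        exact mul_le_mul (hEmono _ _ (by linarith [hr i])) h2 (abs_nonneg _) (hEpos _).le
    have hT : (0:ℝ) ≤ max t 0 := le_max_right _ _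
    have h3 : |∫ s in (0:ℝ)..(max t 0), (g u i s - g v i s)| ≤ E t * ρ / 2 := by
      have h4 : |∫ s in (0:ℝ)..(max t 0), (g u i s - g v i s)| ≤
          ∫ s in (0:ℝ)..(max t 0), K * ρ * Real.exp (2 * K * s) := by
        rw [← Real.norm_eq_abs]
        apply intervalIntegral.norm_integral_le_of_norm_le hT
        · refine Eventually.of_forall fun s hs => ?_
          have := hpt s
          have e : E s = Real.exp (2 * K * s) := by simp [hE, max_eq_left hs.1.le]
          rw [Real.norm_eq_abs]
          rw [e] at this
          linarith
        · exact Continuous.intervalIntegrable (by fun_prop) _ _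
      have h5 : ∫ s in (0:ℝ)..(max t 0), K * ρ * Real.exp (2 * K * s) =
          ρ / 2 * Real.exp (2 * K * (max t 0)) - ρ / 2 * Real.exp (2 * K * 0) := by
        apply intervalIntegral.integral_eq_sub_of_hasDerivAt (f := fun s => ρ / 2 * Real.exp (2 * K * s))
        · intro s _
          have := (((hasDerivAt_id' s).const_mul (2 * K)).exp).const_mul (ρ / 2)
          exact this.congr_deriv (by ring)
        · exact Continuous.intervalIntegrable (by fun_prop) _ _
      rw [h5] at h4
      have : E t = Real.exp (2 * K * max t 0) := rfl
      rw [this]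
      have : 0 ≤ ρ / 2 * Real.exp (2 * K * 0) := by positivity
      linarith
    rw [e1, abs_mul, abs_of_pos (inv_pos.2 (hEpos t)), inv_mul_le_iff₀ (hEpos t)]
    linarith
  have hP0 : ∀ t i, P 0 t i = (E t)⁻¹ * δ := by
    intro t i
    have : ∀ s, g 0 i s = 0 := by
      intro s
      have := hF0 i s
      simpa [g] using this
    simp [P, this]
  have hP0b : ∀ t i, |P 0 t i| ≤ δ := by
    intro t i
    rw [hP0, abs_of_pos (mul_pos (inv_pos.2 (hEpos t)) hδ), inv_mul_le_iff₀ (hEpos t)]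
    nlinarith [hE1 t]
  have hPb : ∀ u : ℝ → Fin m → ℝ, Continuous u → ∀ ρ, 0 ≤ ρ → (∀ t, ‖u t‖ ≤ ρ) →
      ∀ t, ‖P u t‖ ≤ δ + ρ / 2 := by
    intro u hu ρ hρ0 hρ t
    rw [pi_norm_le_iff_of_nonneg (by positivity)]
    intro i
    have h1 := hdiff u 0 hu continuous_const ρ hρ0 (by simpa using hρ) t i
    have h2 := hP0b t i
    rw [Real.norm_eq_abs]
    rw [abs_le] at *
    constructor <;> linarith
  let Φ : BoundedContinuousFunction ℝ (Fin m → ℝ) → BoundedContinuousFunction ℝ (Fin m → ℝ) := fun u =>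
    BoundedContinuousFunction.ofNormedAddCommGroup (P u) (hPc u u.continuous) (δ + ‖u‖ / 2)
      (hPb u u.continuous ‖u‖ (norm_nonneg _) u.norm_coe_le_norm)
  have hΦ : ContractingWith (1/2) Φ := by
    refine ⟨by rw [← NNReal.coe_lt_coe]; norm_num, LipschitzWith.of_dist_le_mul fun u v => ?_⟩
    have hn : (0:ℝ) ≤ dist u v / 2 := by positivity
    have : dist (Φ u) (Φ v) ≤ dist u v / 2 := by
      rw [BoundedContinuousFunction.dist_le hn]
      intro t
      rw [dist_pi_le_iff hn]
      intro i
      exact hdiff u v u.continuous v.continuous (dist u v) dist_nonneg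
        (fun t => by rw [← dist_eq_norm]; exact BoundedContinuousFunction.dist_coe_le_dist t) t i
    refine this.trans (le_of_eq ?_)
    push_cast; ring
  obtain ⟨u, hu⟩ : ∃ u, Φ u = u := ⟨_, hΦ.fixedPoint_isFixedPt⟩
  have hut : ∀ t, P u t = u t := fun t => congrArg (fun w => w t) hu
  have hun : ‖u‖ ≤ 2 * δ := by
    have : ‖u‖ ≤ δ + ‖u‖ / 2 := by
      rw [BoundedContinuousFunction.norm_le (by positivity)]
      intro t
      rw [← hut t]
      exact hPb u u.continuous ‖u‖ (norm_nonneg _) u.norm_coe_le_norm t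
    linarith
  have hz : ∀ t i, E t * u t i = δ + ∫ s in (0:ℝ)..(max t 0), g u i s := by
    intro t i
    rw [← hut t]
    simp only [P]
    rw [← mul_assoc, mul_inv_cancel₀ (hEpos t).ne', one_mul]
  refine ⟨fun t => E t • u t, hEc.smul u.continuous, ?_, ?_, ?_⟩
  · intro t ht i
    simp only [Pi.smul_apply, smul_eq_mul]
    rw [hz, max_eq_right ht]
    simp
  · intro t ht i
    simp only [Pi.smul_apply, smul_eq_mul]
    rw [abs_mul, abs_of_pos (hEpos t)]
    have h1 : |u t i| ≤ 2 * δ := (norm_le_pi_norm (u t) i).trans ((u.norm_coe_le_norm t).trans hun)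
    have e : E t = Real.exp (2 * K * t) := by simp [hE, max_eq_left ht]
    rw [← e]
    nlinarith [hEpos t]
  · intro t ht i
    have hD : HasDerivAt (fun t => δ + ∫ s in (0:ℝ)..t, g u i s) (g u i t) t := by
      apply HasDerivAt.const_add
      exact intervalIntegral.integral_hasDerivAt_right
        ((hgc u u.continuous i).intervalIntegrable _ _)
        ((hgc u u.continuous i).stronglyMeasurableAtFilter _ _)
        (hgc u u.continuous i).continuousAt
    have := hD.hasDerivWithinAt (s := Ici t)
    refine this.congr ?_ ?_
    · intro x hx
      simp only [Pi.smul_apply, smul_eq_mul]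
      rw [hz, max_eq_left (ht.trans hx)]
    · simp only [Pi.smul_apply, smul_eq_mul]
      rw [hz, max_eq_left ht]

lemma exists_pos_lb {m : ℕ} (f : Fin m → ℝ) (hf : ∀ i, 0 < f i) : ∃ M > 0, ∀ i, M ≤ f i := by
  rcases isEmpty_or_nonempty (Fin m) with h | h
  · exact ⟨1, one_pos, fun i => h.elim i⟩
  · obtain ⟨i, hi⟩ := Finite.exists_min f
    exact ⟨f i, hf i, hi⟩

lemma pos_sol {m : ℕ} (d : Fin m → ℝ → ℝ) (a : Fin m → Fin m → ℝ → ℝ) (r : Fin m → ℝ)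
    (hr : ∀ i, 0 < r i) (D : Fin m → ℝ) (hd : ∀ i t, d i t ≤ D i) (ha : ∀ i j t, 0 ≤ a i j t)
    (y : ℝ → Fin m → ℝ) (g : Fin m → ℝ → ℝ)
    (hyc : ∀ i, ContinuousOn (fun t => y t i) (Ici (-(r i))))
    (h0 : ∀ i, ∀ s ∈ Icc (-(r i)) 0, 0 ≤ y s i) (h00 : ∀ i, 0 < y 0 i)
    (hder : ∀ i t, 0 ≤ t → HasDerivWithinAt (fun u => y u i)
      (-(d i t) * y t i + (∑ j, a i j t * y t j) + g i t) (Ici t) t)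
    (hg : ∀ i t, 0 ≤ t → 0 ≤ y (t - r i) i → 0 ≤ g i t) :
    ∀ t, 0 ≤ t → ∀ i, 0 < y t i := by
  apply first_time (fun i t => y t i) 0
  · intro i
    exact (hyc i).mono (Ici_subset_Ici.2 (by linarith [hr i]))
  · intro t ht hprev i
    have := exp_mono_of_right (f := fun u => y u i) (D i) ht
      ((hyc i).mono (fun x hx => by simp only [mem_Ici]; linarith [hr i, hx.1]))
      (fun x hx => hder i x hx.1) (fun x hx => by
        have h1 : 0 < y x i := hprev i x hx
        have h2 : 0 ≤ ∑ j, a i j x * y x j :=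
          Finset.sum_nonneg fun j _ => mul_nonneg (ha i j x) (hprev j x hx).le
        have h3 : 0 ≤ g i x := by
          apply hg i x hx.1
          rcases le_total (x - r i) 0 with h | h
          · exact h0 i _ ⟨by linarith [hx.1], h⟩
          · exact (hprev i (x - r i) ⟨h, by linarith [hx.2, hr i]⟩).le
        have h4 := mul_nonneg (sub_nonneg.2 (hd i x)) h1.le
        nlinarith)
    have h5 := h00 i
    simp only [mul_zero, Real.exp_zero, mul_one] at this
    exact pos_of_mul_pos_left (h5.trans_le this) (Real.exp_pos _).le

lemma rhs_cont {m : ℕ} {d : Fin m → ℝ → ℝ} {a : Fin m → Fin m → ℝ → ℝ} {β c : Fin m → ℝ → ℝ}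
    {r : Fin m → ℝ} (hr : ∀ i, 0 < r i)
    (hdc : ∀ i, Continuous (d i)) (hac : ∀ i j, Continuous (a i j))
    (hβc : ∀ i, Continuous (β i)) (hcc : ∀ i, Continuous (c i))
    (y : ℝ → Fin m → ℝ) (hyc : ∀ i, ContinuousOn (fun t => y t i) (Ici (-(r i)))) (i : Fin m) :
    ContinuousOn (fun t => rhs d a β c r i t y) (Ici 0) := by
  have h1 : ∀ j, ContinuousOn (fun t => y t j) (Ici 0) := fun j =>
    (hyc j).mono (Ici_subset_Ici.2 (by linarith [hr j]))
  have h2 : ContinuousOn (fun t => y (t - r i) i) (Ici 0) := by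
    refine (hyc i).comp (f := fun t => t - r i) (by fun_prop) ?_
    intro t ht
    simp only [mem_Ici] at *
    linarith
  unfold rhs
  have := hdc i
  have := hβc i
  have := hcc i
  have h3 : ContinuousOn (fun t => ∑ j, a i j t * y t j) (Ici 0) :=
    continuousOn_finsetSum _ fun j _ => (hac i j).continuousOn.mul (h1 j)
  exact (((hdc i).neg.continuousOn.mul (h1 i)).add h3).add
    (((hβc i).continuousOn.mul h2).mul ((hcc i).continuousOn.mul h2).neg.rexp)

lemma compare {m : ℕ} {d : Fin m → ℝ → ℝ} {a : Fin m → Fin m → ℝ → ℝ} {β c : Fin m → ℝ → ℝ}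
    {r : Fin m → ℝ} (hr : ∀ i, 0 < r i)
    (hdc : ∀ i, Continuous (d i)) (hac : ∀ i j, Continuous (a i j))
    (hβc : ∀ i, Continuous (β i)) (hcc : ∀ i, Continuous (c i))
    (D : Fin m → ℝ) (hd : ∀ i t, d i t ≤ D i) (ha : ∀ i j t, 0 ≤ a i j t)
    (Bs : Fin m → ℝ) (hβ : ∀ i t, β i t ≤ Bs i) (hβ0 : ∀ i t, 0 < β i t)
    (μ : Fin m → ℝ) (hκ : ∀ i, D i + 1 / r i < μ i)
    (hexp : ∀ i, Real.exp (μ i * r i) * (r i * Bs i) = Real.exp 2)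
    (y z : ℝ → Fin m → ℝ)
    (hyc : ∀ i, ContinuousOn (fun t => y t i) (Ici (-(r i))))
    (hzc : ∀ i, ContinuousOn (fun t => z t i) (Ici (-(r i))))
    (hy : ∀ i t, 0 ≤ t → HasDerivWithinAt (fun u => y u i) (rhs d a β c r i t y) (Ici t) t)
    (hz : ∀ i t, 0 ≤ t → HasDerivWithinAt (fun u => z u i) (rhs d a β c r i t z) (Ici t) t)
    (R : ℝ) (hR : ∀ i, r i ≤ R) (h0 : ∀ i, z 0 i < y 0 i)
    (hG : ∀ i, ∀ t ∈ Icc 0 R, 0 < rhs d a β c r i t y - rhs d a β c r i t z + μ i * (y t i - z t i)) :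
    ∀ t, 0 ≤ t → ∀ i, z t i < y t i := by
  have hw : ∀ i t, 0 ≤ t → HasDerivWithinAt (fun u => y u i - z u i)
      (rhs d a β c r i t y - rhs d a β c r i t z) (Ici t) t := fun i t ht => (hy i t ht).sub (hz i t ht)
  have hwc : ∀ i, ContinuousOn (fun u => y u i - z u i) (Ici 0) := fun i =>
    ((hyc i).sub (hzc i)).mono (Ici_subset_Ici.2 (by linarith [hr i]))
  have hmono : ∀ t, (∀ j, ∀ s ∈ Ico 0 t,
      0 < rhs d a β c r j s y - rhs d a β c r j s z + μ j * (y s j - z s j)) →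
      ∀ i s u, 0 ≤ s → s ≤ u → u ≤ t →
      (y s i - z s i) * Real.exp (μ i * s) ≤ (y u i - z u i) * Real.exp (μ i * u) := by
    intro t hprev i s u hs hsu hut
    exact exp_mono_of_right (f := fun u => y u i - z u i) (μ i) hsu
      ((hwc i).mono fun x hx => hs.trans hx.1)
      (fun x hx => hw i x (hs.trans hx.1))
      (fun x hx => (hprev i x ⟨hs.trans hx.1, hx.2.trans_le hut⟩).le)
  have hpos : ∀ t, 0 ≤ t → (∀ j, ∀ s ∈ Ico 0 t,
      0 < rhs d a β c r j s y - rhs d a β c r j s z + μ j * (y s j - z s j)) →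
      ∀ i, 0 < y t i - z t i := by
    intro t ht hprev i
    have := hmono t hprev i 0 t le_rfl ht le_rfl
    simp only [mul_zero, Real.exp_zero, mul_one] at this
    exact pos_of_mul_pos_left ((sub_pos.2 (h0 i)).trans_le this) (Real.exp_pos _).le
  have hall := first_time
    (fun i t => rhs d a β c r i t y - rhs d a β c r i t z + μ i * (y t i - z t i)) 0
    (fun i => ((rhs_cont hr hdc hac hβc hcc y hyc i).sub (rhs_cont hr hdc hac hβc hcc z hzc i)).add
      (continuousOn_const.mul (hwc i))) (by
    intro t ht hprev i
    rcases le_or_gt t R with htR | htR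
    · exact hG i t ⟨ht, htR⟩
    have hwt := hpos t ht hprev
    have htr : 0 ≤ t - r i := by linarith [hR i]
    have hM := hmono t hprev i (t - r i) t htr (by linarith [hr i]) le_rfl
    have hW : 0 < y (t - r i) i - z (t - r i) i :=
      hpos (t - r i) htr (fun j s hs => hprev j s ⟨hs.1, by linarith [hs.2, hr i]⟩) i
    have hric := ric_low (c i t) (z (t - r i) i) (y (t - r i) i) (by linarith)
    set W := y (t - r i) i - z (t - r i) i with hWdef
    set w := y t i - z t i with hwdef
    have hwi : 0 < w := hwt i
    have hWle : W ≤ w * Real.exp (μ i * r i) := by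
      have e : Real.exp (μ i * t) = Real.exp (μ i * r i) * Real.exp (μ i * (t - r i)) := by
        rw [← Real.exp_add]; congr 1; ring
      rw [e, ← mul_assoc] at hM
      exact le_of_mul_le_mul_right hM (Real.exp_pos _)
    have hBs : 0 < Bs i := (hβ0 i t).trans_le (hβ i t)
    have h1 : β i t * (Real.exp (-2) * W) ≤ 1 / r i * w := by
      have e2 : Real.exp (-2) * Real.exp 2 = 1 := by rw [← Real.exp_add]; simp
      calc β i t * (Real.exp (-2) * W) ≤ Bs i * (Real.exp (-2) * (w * Real.exp (μ i * r i))) := by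
            have := Real.exp_pos (-2)
            have := (hβ0 i t).le
            have := hβ i t
            gcongr
        _ = 1 / r i * w := by
            have h3 := hexp i
            have hri := (hr i).ne'
            rw [one_div, eq_inv_mul_iff_mul_eq₀ hri]
            calc _ = w * (Real.exp (-2) * (Real.exp (μ i * r i) * (r i * Bs i))) := by ring
              _ = w := by rw [h3, e2, mul_one]
    have h2 : 0 ≤ ∑ j, a i j t * (y t j - z t j) :=
      Finset.sum_nonneg fun j _ => mul_nonneg (ha i j t) (hwt j).le
    have hsum : ∑ j, a i j t * (y t j - z t j) = ∑ j, a i j t * y t j - ∑ j, a i j t * z t j := by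
      simp only [mul_sub, Finset.sum_sub_distrib]
    have h5 := mul_le_mul_of_nonneg_left hric (hβ0 i t).le
    have h6 := mul_pos (sub_pos.2 (hκ i)) hwi
    have h7 := mul_nonneg (sub_nonneg.2 (hd i t)) hwi.le
    have e4 : rhs d a β c r i t y - rhs d a β c r i t z + μ i * w =
        (μ i - d i t) * w + ∑ j, a i j t * (y t j - z t j) +
        β i t * (y (t - r i) i * Real.exp (-(c i t * y (t - r i) i)) -
          z (t - r i) i * Real.exp (-(c i t * z (t - r i) i))) := by
      rw [hsum]; simp only [rhs, hwdef]; ring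
    rw [e4]
    nlinarith)
  intro t ht i
  exact sub_pos.1 (hpos t ht (fun j s hs => hall s hs.1 j) i)

/-- Small solution starting in the interior of the exponential cone. -/
lemma exists_small {m : ℕ} (d : Fin m → ℝ → ℝ) (a : Fin m → Fin m → ℝ → ℝ) (β c : Fin m → ℝ → ℝ)
    (r : Fin m → ℝ) (hr : ∀ i, 0 < r i) (hN : NicholsonHyps m d a β c) :
    ∃ K > 0, ∀ R > 0, ∀ η > 0, ∃ δ > 0, ∃ z : ℝ → Fin m → ℝ,
      SolN d a β c r (fun _ _ => δ) z ∧
      ∀ t ∈ Icc 0 R, ∀ i, z t i ≤ η ∧ 0 < z t i ∧ rhs d a β c r i t z ≤ K * η := by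
  obtain ⟨hd, ha, hβ, hc, -, ha0, -, hβ0, ⟨c0, hc0, hcc0⟩, -⟩ := hN
  choose Cd hCd0 hCd using fun i => ap_bdd_s17 (hd i)
  choose Ca hCa0 hCa using fun i j => ap_bdd_s17 (ha i j)
  choose Cb hCb0 hCb using fun i => ap_bdd_s17 (hβ i)
  set k : Fin m → ℝ := fun i => Cd i + ∑ j, Ca i j + Cb i with hk
  have hk0 : ∀ i, 0 ≤ k i := fun i => by
    have := hCd0 i
    have := hCb0 i
    have := Finset.sum_nonneg fun j (_ : j ∈ Finset.univ) => hCa0 i j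
    simp only [hk]; positivity
  set K : ℝ := 1 + ∑ i, k i with hKdef
  have hK : 0 < K := by
    have := Finset.sum_nonneg fun j (_ : j ∈ Finset.univ) => hk0 j
    linarith
  have hkK : ∀ i, k i ≤ K := fun i => by
    have := Finset.single_le_sum (fun j _ => hk0 j) (Finset.mem_univ i)
    linarith
  refine ⟨K, hK, fun R hR η hη => ?_⟩
  set δ := η / (2 * Real.exp (2 * K * R)) with hδdef
  have hδ : 0 < δ := by positivity
  let F : Fin m → ℝ → (Fin m → ℝ) → ℝ → ℝ := fun i s z v =>
    -(d i s) * z i + (∑ j, a i j s * z j) + β i s * (max v 0 * Real.exp (-(c i s * max v 0)))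
  have hFc : ∀ i, Continuous (fun p : ℝ × (Fin m → ℝ) × ℝ => F i p.1 p.2.1 p.2.2) := by
    intro i
    have h1 := (hd i).1
    have h2 := fun j => (ha i j).1
    have h3 := (hβ i).1
    have h4 := (hc i).1
    simp only [F]
    fun_prop
  have hF0 : ∀ i s, F i s 0 0 = 0 := by intro i s; simp [F]
  have hFL : ∀ i s z z' v v' ρ, ‖z - z'‖ ≤ ρ → |v - v'| ≤ ρ →
      |F i s z v - F i s z' v'| ≤ K * ρ := by
    intro i s z z' v v' ρ hz hv
    have hρ : 0 ≤ ρ := (abs_nonneg _).trans hv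
    have hzj : ∀ j, |z j - z' j| ≤ ρ := fun j => (norm_le_pi_norm (z - z') j).trans hz
    have e : F i s z v - F i s z' v' = -(d i s * (z i - z' i)) + ∑ j, a i j s * (z j - z' j) +
        β i s * (max v 0 * Real.exp (-(c i s * max v 0)) -
          max v' 0 * Real.exp (-(c i s * max v' 0))) := by
      simp only [F, mul_sub, Finset.sum_sub_distrib]; ring
    have h1 : |d i s * (z i - z' i)| ≤ Cd i * ρ := by
      rw [abs_mul]; exact mul_le_mul (hCd i s) (hzj i) (abs_nonneg _) (hCd0 i)
    have h2 : |∑ j, a i j s * (z j - z' j)| ≤ (∑ j, Ca i j) * ρ := by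
      rw [Finset.sum_mul]
      refine (Finset.abs_sum_le_sum_abs _ _).trans (Finset.sum_le_sum fun j _ => ?_)
      rw [abs_mul]; exact mul_le_mul (hCa i j s) (hzj j) (abs_nonneg _) (hCa0 i j)
    have h3 := (ric_lip (c i s) v' v (hc0.le.trans (hcc0 i s))).trans hv
    have h4 : |β i s * (max v 0 * Real.exp (-(c i s * max v 0)) -
          max v' 0 * Real.exp (-(c i s * max v' 0)))| ≤ Cb i * ρ := by
      rw [abs_mul]; exact mul_le_mul (hCb i s) h3 (abs_nonneg _) (hCb0 i)
    have h5 : k i * ρ ≤ K * ρ := mul_le_mul_of_nonneg_right (hkK i) hρ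
    rw [e]
    refine le_trans ?_ h5
    refine (abs_add_le _ _).trans ?_
    have h6 := abs_add_le (-(d i s * (z i - z' i))) (∑ j, a i j s * (z j - z' j))
    rw [abs_neg] at h6
    simp only [hk, add_mul]
    linarith
  obtain ⟨z, hzc, hz0, hzb, hzd⟩ := exists_sol r hr F hFc K hK hF0 hFL δ hδ
  have hzpos : ∀ t, 0 ≤ t → ∀ i, 0 < z t i := by
    apply pos_sol d a r hr (fun i => supR (d i)) (fun i t => le_supR (hd i) t) ha0 z
      (fun i t => β i t * (max (z (t - r i) i) 0 * Real.exp (-(c i t * max (z (t - r i) i) 0))))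
    · intro i
      exact Continuous.continuousOn (by fun_prop)
    · intro i s hs
      rw [hz0 s hs.2 i]; exact hδ.le
    · intro i; rw [hz0 0 le_rfl i]; exact hδ
    · intro i t ht
      exact hzd t ht i
    · intro i t ht _
      have := (hβ0 i t).le
      have := le_max_right (z (t - r i) i) 0
      positivity
  have hzpos' : ∀ t i, 0 < z t i := by
    intro t i
    rcases le_total 0 t with h | h
    · exact hzpos t h i
    · rw [hz0 t h i]; exact hδ
  have hFr : ∀ t i, F i t (z t) (z (t - r i) i) = rhs d a β c r i t z := by
    intro t i
    simp only [F, rhs, max_eq_left (hzpos' (t - r i) i).le]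
    ring
  have h2δ : 2 * δ * Real.exp (2 * K * R) = η := by
    rw [hδdef]; field_simp
  have hexp1 : 1 ≤ Real.exp (2 * K * R) := Real.one_le_exp (by positivity)
  have hzη : ∀ t ≤ R, ∀ i, |z t i| ≤ η := by
    intro t ht i
    rcases le_total 0 t with h | h
    · refine (hzb t h i).trans ?_
      rw [← h2δ]
      gcongr
    · rw [hz0 t h i, abs_of_pos hδ]
      nlinarith
  refine ⟨δ, hδ, z, ⟨?_, ?_, ?_⟩, ?_⟩
  · intro i
    exact Continuous.continuousOn (by fun_prop)
  · intro i s
    exact hz0 s s.2.2 i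
  · intro i t ht
    rw [← hFr]
    exact hzd t ht i
  · intro t ht i
    refine ⟨(le_abs_self _).trans (hzη t ht.2 i), hzpos' t i, ?_⟩
    rw [← hFr]
    have := hFL i t (z t) 0 (z (t - r i) i) 0 η (by
      rw [sub_zero, pi_norm_le_iff_of_nonneg hη.le]
      exact fun j => hzη t ht.2 j) (by
      rw [sub_zero]
      exact hzη _ (by linarith [ht.2, hr i]) i)
    rw [hF0, sub_zero] at this
    exact (le_abs_self _).trans this

lemma mu_facts_s17 {m : ℕ} {d β : Fin m → ℝ → ℝ} {r : Fin m → ℝ} (hr : ∀ i, 0 < r i)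
    (hB : ∀ i, 0 < supR (β i))
    (hcond : ∀ i, r i * supR (β i) * Real.exp (supR (d i) * r i) < Real.exp 1) (i : Fin m) :
    supR (d i) + 1 / r i < muN r β i ∧
      Real.exp (muN r β i * r i) * (r i * supR (β i)) = Real.exp 2 := by
  have hri := hr i
  have hp : 0 < r i * supR (β i) := mul_pos hri (hB i)
  have hmr : muN r β i * r i = 2 - Real.log (r i * supR (β i)) := by
    rw [muN, Real.log_div (Real.exp_pos 2).ne' hp.ne', Real.log_exp]
    field_simp
  constructor
  · have h1 := Real.log_lt_log (mul_pos hp (Real.exp_pos _)) (hcond i)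
    rw [Real.log_mul hp.ne' (Real.exp_pos _).ne', Real.log_exp, Real.log_exp] at h1
    have h2 : (supR (d i) + 1 / r i) * r i < muN r β i * r i := by
      rw [hmr, add_mul, one_div, inv_mul_cancel₀ hri.ne']
      linarith
    exact lt_of_mul_lt_mul_right h2 hri.le
  · rw [hmr, Real.exp_sub, Real.exp_log hp, div_mul_cancel₀ _ hp.ne']

/-- under the strict condition `rᵢ βᵢ⁺ e^{dᵢ⁺ rᵢ} < e`, uniform persistence
in `Int K̃_B` is equivalent to uniform persistence in `Int X₊`. -/
theorem statement17
    {m : ℕ} (hm : 1 ≤ m)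
    (d : Fin m → ℝ → ℝ) (a : Fin m → Fin m → ℝ → ℝ) (β c : Fin m → ℝ → ℝ)
    (r : Fin m → ℝ) (hr : ∀ i, 0 < r i)
    (hN : NicholsonHyps m d a β c)
    (hcond : ∀ i, r i * supR (β i) * Real.exp (supR (d i) * r i) < Real.exp 1) :
    -- (a) uniform persistence in the interior of the exponential cone
    (∃ ψ : XN m r, strPosN hr (muN r β) ψ ∧
      ∀ φ : XN m r, strPosN hr (muN r β) φ →
        ∀ y : ℝ → Fin m → ℝ, SolN d a β c r φ y →
          ∃ t₀ : ℝ, ∀ t, t₀ ≤ t → expLeN (muN r β) ψ (segN r y t))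
    ↔
    -- (b) uniform persistence in the interior of the standard cone
    (∃ M : ℝ, 0 < M ∧
      ∀ φ : XN m r, XPos φ → (∀ i, 0 < φ i (pt0N r hr i)) →
        ∀ y : ℝ → Fin m → ℝ, SolN d a β c r φ y →
          ∃ t₀ : ℝ, ∀ t, t₀ ≤ t → ∀ i, M ≤ y t i) := by
  have hN' := hN
  obtain ⟨hd, ha, hβ, hc, ⟨d0, hd0, hdd0⟩, ha0, -, hβ0, -, -⟩ := hN'
  have hB : ∀ i, 0 < supR (β i) := fun i => (hβ0 i 0).trans_le (le_supR (hβ i) 0)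
  have hD : ∀ i, 0 < supR (d i) := fun i => (hd0.trans_le (hdd0 i 0)).trans_le (le_supR (hd i) 0)
  have hmu := mu_facts_s17 (d := d) hr hB hcond
  have hκ : ∀ i, 0 < muN r β i - supR (d i) := fun i => by
    have := (hmu i).1
    have : 0 < 1 / r i := one_div_pos.2 (hr i)
    linarith
  have hμ : ∀ i, 0 < muN r β i := fun i => by linarith [hκ i, hD i]
  obtain ⟨R, hR0, hR⟩ : ∃ R > 0, ∀ i, r i ≤ R := by
    refine ⟨1 + ∑ i, r i, ?_, fun i => ?_⟩
    · have := Finset.sum_nonneg fun j (_ : j ∈ Finset.univ) => (hr j).le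
      linarith
    · have := Finset.single_le_sum (fun j _ => (hr j).le) (Finset.mem_univ i)
      linarith
  have hlow : ∀ (y : ℝ → Fin m → ℝ) (t : ℝ) (i : Fin m), (∀ j, 0 ≤ y t j) → 0 ≤ y (t - r i) i →
      (muN r β i - supR (d i)) * y t i ≤ rhs d a β c r i t y + muN r β i * y t i := by
    intro y t i h1 h2
    have h3 : 0 ≤ ∑ j, a i j t * y t j := Finset.sum_nonneg fun j _ => mul_nonneg (ha0 i j t) (h1 j)
    have h4 : 0 ≤ β i t * y (t - r i) i * Real.exp (-(c i t * y (t - r i) i)) :=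
      mul_nonneg (mul_nonneg (hβ0 i t).le h2) (Real.exp_pos _).le
    have h5 := mul_le_mul_of_nonneg_right (le_supR (hd i) t) (h1 i)
    unfold rhs
    nlinarith
  constructor
  · rintro ⟨ψ, hψ, hper⟩
    obtain ⟨M, hM, hMψ⟩ := exists_pos_lb (fun i => ψ i (ptnegN r hr i)) hψ.2.1
    refine ⟨M, hM, fun φ hφ hφ0 y hy => ?_⟩
    obtain ⟨hyc, hyi, hyd⟩ := hy
    have hys : ∀ i, ∀ s ∈ Icc (-(r i)) 0, 0 ≤ y s i := fun i s hs => by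
      rw [hyi i ⟨s, hs⟩]; exact hφ i _
    have hypos : ∀ t, 0 ≤ t → ∀ i, 0 < y t i := by
      apply pos_sol d a r hr (fun i => supR (d i)) (fun i t => le_supR (hd i) t) ha0 y
        (fun i t => β i t * y (t - r i) i * Real.exp (-(c i t * y (t - r i) i))) hyc hys
      · intro i
        have := hyi i (pt0N r hr i)
        have h2 := hφ0 i
        rw [← this] at h2
        exact h2
      · exact hyd
      · intro i t ht h
        exact mul_nonneg (mul_nonneg (hβ0 i t).le h) (Real.exp_pos _).le
    have hypos' : ∀ i t, -(r i) ≤ t → 0 ≤ y t i := fun i t ht => by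
      rcases le_total 0 t with h | h
      · exact (hypos t h i).le
      · exact hys i t ⟨ht, h⟩
    -- lower bound on [0,R]
    have hlb : ∀ i, ∃ b > 0, ∀ t ∈ Icc 0 R, b ≤ y t i := by
      intro i
      obtain ⟨t, ht, hmin⟩ := (isCompact_Icc (a := (0:ℝ)) (b := R)).exists_isMinOn
        ⟨0, le_rfl, hR0.le⟩ ((hyc i).mono (fun x hx => by
          simp only [mem_Ici]; linarith [hx.1, hr i]) : ContinuousOn (fun t => y t i) (Icc 0 R))
      exact ⟨y t i, hypos t ht.1 i, fun s hs => hmin hs⟩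
    choose b hb0 hb using hlb
    obtain ⟨m0, hm0, hm0b⟩ := exists_pos_lb b hb0
    obtain ⟨K, hK, hsmall⟩ := exists_small d a β c r hr hN
    obtain ⟨η, hη0, hηm, hηκ⟩ : ∃ η > 0, η < m0 ∧
        ∀ i, (K + muN r β i) * η < (muN r β i - supR (d i)) * m0 := by
      have hκm : ∀ i, 0 < (muN r β i - supR (d i)) * m0 / (K + muN r β i) := fun i =>
        div_pos (mul_pos (hκ i) hm0) (by linarith [hμ i])
      obtain ⟨q, hq, hqi⟩ := exists_pos_lb _ hκm
      refine ⟨min m0 q / 2, by positivity, ?_, fun i => ?_⟩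
      · have := min_le_left m0 q
        linarith
      · have h1 : min m0 q / 2 < (muN r β i - supR (d i)) * m0 / (K + muN r β i) := by
          have := min_le_right m0 q
          have := hqi i
          linarith
        rw [lt_div_iff₀ (by linarith [hμ i])] at h1
        linarith
    obtain ⟨δ, hδ, z, hz, hzb⟩ := hsmall R hR0 η hη0
    obtain ⟨t0, ht0⟩ := hper _ (strPos_const hr _ hμ (fun _ => δ) (fun _ => hδ)) z hz
    obtain ⟨hzc, hzi, hzd⟩ := hz
    have hcmp : ∀ t, 0 ≤ t → ∀ i, z t i < y t i := by
      apply compare hr (fun i => (hd i).1) (fun i j => (ha i j).1) (fun i => (hβ i).1)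
        (fun i => (hc i).1) (fun i => supR (d i)) (fun i t => le_supR (hd i) t) ha0
        (fun i => supR (β i)) (fun i t => le_supR (hβ i) t) hβ0 (muN r β) (fun i => (hmu i).1)
        (fun i => (hmu i).2) y z hyc hzc hyd hzd R hR
      · intro i
        have h1 := (hzb 0 ⟨le_rfl, hR0.le⟩ i).1
        have h2 := hb i 0 ⟨le_rfl, hR0.le⟩
        linarith [hm0b i]
      · intro i t ht
        obtain ⟨h1, h2, h3⟩ := hzb t ht i
        have h4 := hlow y t i (fun j => (hypos t ht.1 j).le) (hypos' i _ (by linarith [ht.1]))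
        have h5 := mul_le_mul_of_nonneg_left ((hm0b i).trans (hb i t ht)) (hκ i).le
        have h6 := mul_le_mul_of_nonneg_left h1 (hμ i).le
        have h7 := hηκ i
        nlinarith
    refine ⟨max t0 0, fun t ht i => ?_⟩
    have h1 := (ht0 (t + r i) (by linarith [hr i, le_max_left t0 0])).1 i (ptnegN r hr i)
    have h2 : segN r z (t + r i) i (ptnegN r hr i) = z t i := by
      simp [segN, ptnegN]
    rw [h2] at h1
    have h3 := hcmp t ((le_max_right t0 0).trans ht) i
    exact (hMψ i).trans (h1.trans h3.le)
  · rintro ⟨M, hM, hper⟩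
    have hq : ∀ i, 0 < (muN r β i - supR (d i)) * M / muN r β i := fun i =>
      div_pos (mul_pos (hκ i) hM) (hμ i)
    refine ⟨fun i _ => (muN r β i - supR (d i)) * M / muN r β i, strPos_const hr _ hμ _ hq, ?_⟩
    intro φ hφ y hy
    obtain ⟨t0, ht0⟩ := hper φ (fun i s => (strPos_pos hr _ φ hφ i s).le)
      (fun i => strPos_pos hr _ φ hφ i _) y hy
    obtain ⟨hyc, hyi, hyd⟩ := hy
    refine ⟨max t0 0 + 2 * R, fun t ht => ⟨fun i s => ?_, fun i s u hsu => ?_⟩⟩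
    · have h1 : t0 ≤ t + s := by
        linarith [s.2.1, hR i, le_max_left t0 0]
      refine le_trans ?_ (ht0 _ h1 i)
      rw [div_le_iff₀ (hμ i)]
      nlinarith [hD i]
    · have hs1 := s.2.1
      have hRi := hR i
      have hl1 := le_max_left t0 0
      have hl2 := le_max_right t0 0
      set ε := (muN r β i - supR (d i)) * M / muN r β i with hε
      have hεμ : muN r β i * ε = (muN r β i - supR (d i)) * M := by
        rw [hε, mul_div_cancel₀ _ (hμ i).ne']
      have key := exp_mono_of_right (f := fun v => y v i - ε)
        (f' := fun v => rhs d a β c r i v y) (a := t + s) (b := t + u) (muN r β i) (by linarith)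
        (((hyc i).sub continuousOn_const).mono (fun x hx => by
          simp only [mem_Ici]; linarith [hx.1, hr i]))
        (fun x hx => (hyd i x (by linarith [hx.1])).sub_const _) (fun x hx => by
          have hx1 : t0 ≤ x := by linarith [hx.1]
          have hx2 : t0 ≤ x - r i := by linarith [hx.1]
          have h4 := hlow y x i (fun j => hM.le.trans (ht0 x hx1 j)) (hM.le.trans (ht0 _ hx2 i))
          have h5 := mul_le_mul_of_nonneg_left (ht0 x hx1 i) (hκ i).le
          linarith)
      simp only [mul_add, Real.exp_add] at key
      have hpos := Real.exp_pos (muN r β i * t)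
      simp only [segN]
      refine le_of_mul_le_mul_right ?_ hpos
      linarith

end Nicholson
end
end
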